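/- (Estimates (5.27) and (5.28)) Let u : Θ → ℝ be bounded, n ≥ 1, and let 0 = s_1 < ⋯ < s_i ≤ T, x_1,…,x_{i−1}, x ∈ ℝ^d with x_i := (x_1,…,x_{i−1},x), and s ∈ [s_i, T] with s > 0. Let (θ̃, ℓ̃), with θ̃ = (t̃, ω̃), be 1-optimal in the definition of u^n(s, η^{λ_i}(x)), and let ℓ̃^{−1} denote the inverse of the bijection ℓ̃|_{[0,t̃]} : [0,t̃] → [0,s]. Then there exists a constant C, depending only on T, p and ‖u‖_∞, such that: |t̃ − ℓ̃^{−1}(s_i)| ≤ C n^{−(3p+3)/2} + |s − s_i|, and ∫_{ℓ̃^{−1}(s_i)}^{t̃} |x_i·1 − ω̃_t|^p dt ≤ C n^{−p/(p+1)} ( n^{−(3p+3)/2} + |s − s_i| )^{1/(p+1)}. -/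

import Mathlib

open MeasureTheory Set Filter Topology

noncomputable section

/-- `ℝ^d` with the Euclidean norm. -/
abbrev E (d : ℕ) := EuclideanSpace ℝ (Fin d)

/-- A point `θ = (t, ω)` of `Θ = [0,T] × Ω`, where `Ω` is the set of continuous
paths `[0,T] → ℝ^d` starting from the origin. -/
structure Theta (T : ℝ) (d : ℕ) where
  t : ℝ
  path : ℝ → E d
  ht : t ∈ Set.Icc 0 T
  cont : ContinuousOn path (Set.Icc 0 T)
  init : path 0 = 0

/-- `‖f‖_q^q := ‖f T‖^q + ∫_0^T ‖f s‖^q ds`. -/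
def pnormPow (T q : ℝ) {d : ℕ} (f : ℝ → E d) : ℝ :=
  ‖f T‖ ^ q + ∫ s in (0:ℝ)..T, ‖f s‖ ^ q

/-- `‖f‖_q := (‖f T‖^q + ∫_0^T ‖f s‖^q ds)^(1/q)`. -/
def pnorm (T q : ℝ) {d : ℕ} (f : ℝ → E d) : ℝ := (pnormPow T q f) ^ (1 / q)

/-- The pseudo-distance `d_p(θ,θ') = |t - t'| + ‖ω_{t∧·} - ω'_{t'∧·}‖_p`. -/
def dpDist (T p : ℝ) {d : ℕ} (θ θ' : Theta T d) : ℝ :=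
  |θ.t - θ'.t| + pnorm T p (fun s => θ.path (min θ.t s) - θ'.path (min θ'.t s))

/-- The set `𝓛_{t,s}` of monotone time changes: for `s > 0`, nondecreasing
`ℓ : [0,T] → ℝ` restricting to an increasing bijection from `[0,t]` onto `[0,s]`
with `ℓ(r) = r - t + s` on `(t,T]`; for `s = 0` the single function `ℓ^{t,0}`. -/
def LL (T t s : ℝ) : Set (ℝ → ℝ) :=
  if s = 0 then {fun r => if r ≤ t then 0 else r - t}
  else {ℓ | MonotoneOn ℓ (Set.Icc 0 T) ∧ StrictMonoOn ℓ (Set.Icc 0 t) ∧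
        Set.BijOn ℓ (Set.Icc 0 t) (Set.Icc 0 s) ∧ ∀ r ∈ Set.Ioc t T, ℓ r = r - t + s}

/-- `‖ℓ - I‖_∞ := sup_{0 ≤ r ≤ T} |ℓ(r) - r|`. -/
def supId (T : ℝ) (ℓ : ℝ → ℝ) : ℝ := ⨆ r : Set.Icc (0:ℝ) T, |ℓ r - (r : ℝ)|

/-- The penalization `Φ(s,η,θ,ℓ) := ‖ℓ - I‖_∞^{2/(3p+3)} + ‖η_{s∧ℓ(·)} - ω_{t∧·}‖_{p+1}^{p+1}`. -/
def Phi (T p : ℝ) {d : ℕ} (s : ℝ) (η : ℝ → E d) (θ : Theta T d) (ℓ : ℝ → ℝ) : ℝ :=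
  (supId T ℓ) ^ (2 / (3 * p + 3)) +
    pnormPow T (p + 1) (fun r => η (min s (ℓ r)) - θ.path (min θ.t r))

/-- The regularization
`u^n(s,η) := sup { u(θ) - n Φ(s,η,θ,ℓ) : θ ∈ Θ \ {𝟎}, ℓ ∈ 𝓛_{t,s} }`. -/
def reg (T p : ℝ) {d : ℕ} (u : Theta T d → ℝ) (n : ℕ) (s : ℝ) (η : ℝ → E d) : ℝ :=
  sSup { x | ∃ θ : Theta T d, ∃ ℓ : ℝ → ℝ, (θ.t, θ.path) ≠ (0, 0) ∧ ℓ ∈ LL T θ.t s ∧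
        x = u θ - (n : ℝ) * Phi T p s η θ ℓ }

/-- A càdlàg path on `[0,T]`: right-continuous with left limits. -/
def Cadlag (T : ℝ) {d : ℕ} (η : ℝ → E d) : Prop :=
  (∀ x ∈ Set.Ico (0:ℝ) T, ContinuousWithinAt η (Set.Ici x) x) ∧
  (∀ x ∈ Set.Ioc (0:ℝ) T, ∃ l : E d, Filter.Tendsto η (nhdsWithin x (Set.Iio x)) (𝓝 l))

/-- The piecewise constant path `η^{λ_i}(x)_s = Σ_j x_j 1_{{s ≥ s_j}}`. -/
def pcPath {d i : ℕ} (sVec : Fin i → ℝ) (xVec : Fin i → E d) : ℝ → E d :=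
  fun r => ∑ j : Fin i, if sVec j ≤ r then xVec j else 0

/-!
Smoothing `η` by forward averages produces continuous paths `ω` with `Φ(s, η, (s, ω), I)`
arbitrarily small, so `u^n(s, η) ≥ -‖u‖_∞`, and `n Φ < 2 ‖u‖_∞ + 1` at every `1`-optimal pair.
The two summands of `Φ` then give the two estimates. On the one hand `‖ℓ - I‖_∞ ≤ Φ^{(3p+3)/2}`,
and `ℓ(t) = s`, `ℓ(r₀) = s_i` bound `|t - r₀|` by `2 ‖ℓ - I‖_∞ + |s - s_i|`. On the other hand
`η_{s ∧ ℓ(·)}` equals `x_i·1` on `[r₀, t]`, so `∫_{r₀}^t |x_i·1 - ω|^{p+1} ≤ Φ`, and Hölder's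
inequality lowers the exponent from `p + 1` to `p`.
-/

/-! ### Hölder's inequality against the constant function -/

lemma integral_norm_rpow_le_rpow_integral_mul_rpow_measureReal {α F : Type*}
    [MeasurableSpace α] [NormedAddCommGroup F] {μ : Measure α} [IsFiniteMeasure μ] {f : α → F}
    {p q : ℝ} (hp : 0 < p) (hpq : p < q) (hf : MemLp f (ENNReal.ofReal q) μ) :
    ∫ x, ‖f x‖ ^ p ∂μ ≤ (∫ x, ‖f x‖ ^ q ∂μ) ^ (p / q) * μ.real univ ^ (1 - p / q) := by
  have hconj : (q / p).HolderConjugate (1 - p / q)⁻¹ := by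
    rw [Real.holderConjugate_iff, one_lt_div hp]
    exact ⟨hpq, by rw [inv_div, inv_inv]; ring⟩
  have hmem : MemLp (fun x => ‖f x‖ ^ p) (ENNReal.ofReal (q / p)) μ := by
    simpa only [ENNReal.ofReal_div_of_pos hp, ENNReal.toReal_ofReal hp.le]
      using hf.norm_rpow_div (ENNReal.ofReal p)
  have hpow (x : α) : (‖f x‖ ^ p) ^ (q / p) = ‖f x‖ ^ q := by
    rw [← Real.rpow_mul (norm_nonneg _), mul_div_cancel₀ _ hp.ne']
  have holder := integral_mul_le_Lp_mul_Lq_of_nonneg (g := fun _ => (1 : ℝ)) hconj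
    (.of_forall fun x => Real.rpow_nonneg (norm_nonneg (f x)) p)
    (.of_forall fun _ => zero_le_one) hmem (memLp_const 1)
  simpa [hpow] using holder

lemma intervalIntegral_norm_rpow_le_of_continuousOn {F : Type*} [NormedAddCommGroup F]
    {a b p q : ℝ} (hab : a ≤ b) (hp : 0 < p) (hpq : p < q) {f : ℝ → F}
    (hf : ContinuousOn f (Icc a b)) :
    ∫ x in a..b, ‖f x‖ ^ p ≤ (∫ x in a..b, ‖f x‖ ^ q) ^ (p / q) * (b - a) ^ (1 - p / q) := by
  have hmem : MemLp f (ENNReal.ofReal q) (volume.restrict (Ioc a b)) := by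
    obtain ⟨B, hB⟩ := isCompact_Icc.exists_bound_of_continuousOn hf
    have hmeas : AEStronglyMeasurable f (volume.restrict (Icc a b)) :=
      hf.aestronglyMeasurable_of_isCompact isCompact_Icc measurableSet_Icc
    exact .of_bound (hmeas.mono_set Ioc_subset_Icc_self) B <|
      (ae_restrict_mem measurableSet_Ioc).mono fun x hx => hB x (Ioc_subset_Icc_self hx)
  simpa [intervalIntegral.integral_of_le hab, hab] using
    integral_norm_rpow_le_rpow_integral_mul_rpow_measureReal hp hpq hmem

/-! ### Smoothing by forward averages -/

section SmoothedPath

variable {F : Type*} [NormedAddCommGroup F] [NormedSpace ℝ F] {η : ℝ → F}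

/-- The average of `η` over `[r, r + h]`, damped near `r = 0` so that it vanishes at `0`: for
`h ↓ 0` these are continuous approximations, starting from the origin, of a right-continuous
path `η`. Meaningful for `0 < h` and `0 ≤ r`. -/
def smoothedPath (η : ℝ → F) (h r : ℝ) : F :=
  min 1 (r / h) • h⁻¹ • ∫ z in r..(r + h), η z

lemma smoothedPath_zero_right (η : ℝ → F) (h : ℝ) : smoothedPath η h 0 = 0 := by
  simp [smoothedPath]

lemma smoothedPath_eq_sub (hη : ∀ a b, IntervalIntegrable η volume a b) (h r : ℝ) :
    smoothedPath η h r =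
      min 1 (r / h) • h⁻¹ • ((∫ z in (0 : ℝ)..(r + h), η z) - ∫ z in (0 : ℝ)..r, η z) := by
  rw [smoothedPath, intervalIntegral.integral_interval_sub_left (hη _ _) (hη _ _)]

lemma continuous_smoothedPath (hη : ∀ a b, IntervalIntegrable η volume a b) (h : ℝ) :
    Continuous (smoothedPath η h) := by
  have hprim : Continuous fun b => ∫ z in (0 : ℝ)..b, η z :=
    intervalIntegral.continuous_primitive hη 0
  simp only [funext (smoothedPath_eq_sub hη h)]
  fun_prop

lemma norm_smoothedPath_le {B : ℝ} (hB : ∀ r, ‖η r‖ ≤ B) {h r : ℝ} (hh : 0 < h) (hr : 0 ≤ r) :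
    ‖smoothedPath η h r‖ ≤ B := by
  have hdamp : ‖min 1 (r / h)‖ ≤ 1 := by
    rw [Real.norm_of_nonneg (by positivity)]
    exact min_le_left _ _
  have havg : ‖h⁻¹ • ∫ z in r..(r + h), η z‖ ≤ B := by
    have hint : ‖∫ z in r..(r + h), η z‖ ≤ B * |r + h - r| :=
      intervalIntegral.norm_integral_le_of_norm_le_const fun z _ => hB z
    rw [add_sub_cancel_left, abs_of_pos hh] at hint
    rwa [norm_smul, norm_inv, Real.norm_of_nonneg hh.le, inv_mul_le_iff₀' hh]
  rw [smoothedPath, norm_smul]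
  exact (mul_le_of_le_one_left (norm_nonneg _) hdamp).trans havg

lemma tendsto_smoothedPath [CompleteSpace F] (hη : ∀ a b, IntervalIntegrable η volume a b)
    {r : ℝ} (hr : 0 < r) (hmeas : StronglyMeasurableAtFilter η (𝓝[>] r))
    (hcont : ContinuousWithinAt η (Ici r) r) :
    Tendsto (fun h => smoothedPath η h r) (𝓝[>] 0) (𝓝 (η r)) := by
  have hderiv : HasDerivWithinAt (fun b => ∫ z in (0 : ℝ)..b, η z) (η r) (Ici r) r :=
    intervalIntegral.integral_hasDerivWithinAt_right (hη 0 r) hmeas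
      (hcont.mono Ioi_subset_Ici_self)
  have hshift : Tendsto (fun h => r + h) (𝓝[>] 0) (𝓝[>] r) := by
    refine tendsto_nhdsWithin_iff.2
      ⟨((continuous_const_add r).tendsto' 0 r (add_zero r)).mono_left nhdsWithin_le_nhds, ?_⟩
    filter_upwards [self_mem_nhdsWithin] with h hh using lt_add_of_pos_right r hh
  have havg := (hasDerivWithinAt_iff_tendsto_slope' self_notMem_Ioi).1
    (hderiv.mono Ioi_subset_Ici_self) |>.comp hshift
  have hdamp : ∀ᶠ h in 𝓝[>] (0 : ℝ), min 1 (r / h) = 1 := by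
    filter_upwards [Ioc_mem_nhdsGT hr] with h hh
    exact min_eq_left ((one_le_div hh.1).2 hh.2)
  refine havg.congr' ?_
  filter_upwards [hdamp] with h hh
  simp [smoothedPath_eq_sub hη, hh, slope]

end SmoothedPath

/-! ### The penalization -/

section Penalization

variable {T p s : ℝ} {d : ℕ} {η : ℝ → E d} {θ : Theta T d} {ℓ : ℝ → ℝ}

lemma pnormPow_nonneg (hT : 0 ≤ T) (q : ℝ) (f : ℝ → E d) : 0 ≤ pnormPow T q f :=
  add_nonneg (by positivity) (intervalIntegral.integral_nonneg hT fun _ _ => by positivity)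

lemma tendsto_pnormPow_zero {ι : Type*} {l : Filter ι} [l.IsCountablyGenerated] {q B : ℝ}
    (hT : 0 < T) (hq : 0 < q) {f : ι → ℝ → E d} (hmeas : ∀ i, Measurable (f i))
    (hbound : ∀ᶠ i in l, ∀ r ∈ Ioc 0 T, ‖f i r‖ ≤ B)
    (hlim : ∀ r ∈ Ioc 0 T, Tendsto (f · r) l (𝓝 0)) :
    Tendsto (fun i => pnormPow T q (f i)) l (𝓝 0) := by
  have hpow (r : ℝ) (hr : r ∈ Ioc 0 T) : Tendsto (fun i => ‖f i r‖ ^ q) l (𝓝 0) := by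
    simpa [hq.ne'] using (hlim r hr).norm.rpow_const (.inr hq.le)
  have hint : Tendsto (fun i => ∫ r in (0 : ℝ)..T, ‖f i r‖ ^ q) l
      (𝓝 (∫ _ in (0 : ℝ)..T, 0)) := by
    refine intervalIntegral.tendsto_integral_filter_of_dominated_convergence (fun _ => B ^ q)
      (.of_forall fun i => ((hmeas i).norm.pow_const q).aestronglyMeasurable) ?_
      intervalIntegrable_const (.of_forall fun r hr => hpow r (uIoc_of_le hT.le ▸ hr))
    filter_upwards [hbound] with i hi
    refine .of_forall fun r hr => ?_
    rw [Real.norm_of_nonneg (by positivity)]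
    exact Real.rpow_le_rpow (norm_nonneg _) (hi r (uIoc_of_le hT.le ▸ hr)) hq.le
  simpa [pnormPow] using (hpow T ⟨hT, le_rfl⟩).add hint

lemma supId_nonneg (T : ℝ) (ℓ : ℝ → ℝ) : 0 ≤ supId T ℓ :=
  Real.iSup_nonneg fun _ => abs_nonneg _

lemma supId_id (T : ℝ) : supId T id = 0 := by
  simp [supId]

lemma abs_sub_le_supId (hℓ : MonotoneOn ℓ (Icc 0 T)) {r : ℝ} (hr : r ∈ Icc 0 T) :
    |ℓ r - r| ≤ supId T ℓ := by
  have hT : 0 ≤ T := hr.1.trans hr.2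
  refine le_ciSup (f := fun r : Icc (0 : ℝ) T => |ℓ r - r|) ⟨|ℓ 0| + |ℓ T| + T, ?_⟩ ⟨r, hr⟩
  rintro _ ⟨⟨x, hx⟩, rfl⟩
  have hlow : ℓ 0 ≤ ℓ x := hℓ ⟨le_rfl, hT⟩ hx hx.1
  have hupp : ℓ x ≤ ℓ T := hℓ hx ⟨hT, le_rfl⟩ hx.2
  rw [abs_le]
  constructor <;> grind

lemma Phi_nonneg : 0 ≤ Phi T p s η θ ℓ :=
  add_nonneg (Real.rpow_nonneg (supId_nonneg T ℓ) _)
    (pnormPow_nonneg (θ.ht.1.trans θ.ht.2) _ _)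

lemma supId_le_rpow_Phi (hp : 0 < p) : supId T ℓ ≤ Phi T p s η θ ℓ ^ ((3 * p + 3) / 2) := by
  rw [← Real.rpow_inv_le_iff_of_pos (supId_nonneg T ℓ) Phi_nonneg (by positivity), inv_div]
  exact le_add_of_nonneg_right (pnormPow_nonneg (θ.ht.1.trans θ.ht.2) _ _)

lemma integral_norm_rpow_le_Phi :
    ∫ r in (0 : ℝ)..T, ‖η (min s (ℓ r)) - θ.path (min θ.t r)‖ ^ (p + 1) ≤ Phi T p s η θ ℓ :=
  (le_add_of_nonneg_left (by positivity)).trans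
    (le_add_of_nonneg_left (Real.rpow_nonneg (supId_nonneg T ℓ) _))

lemma intervalIntegrable_norm_sub_rpow {B q : ℝ} (hη : Measurable η) (hB : ∀ r, ‖η r‖ ≤ B)
    (hℓ : MonotoneOn ℓ (Icc 0 T)) (hq : 0 ≤ q) (θ : Theta T d) :
    IntervalIntegrable (fun r => ‖η (min s (ℓ r)) - θ.path (min θ.t r)‖ ^ q) volume 0 T := by
  have hstopped : ContinuousOn (fun r => θ.path (min θ.t r)) (Icc 0 T) :=
    θ.cont.comp (by fun_prop) fun r hr => ⟨le_min θ.ht.1 hr.1, (min_le_right _ _).trans hr.2⟩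
  obtain ⟨A, hA⟩ := isCompact_Icc.exists_bound_of_continuousOn hstopped
  have hmeas : AEMeasurable (fun r => η (min s (ℓ r)) - θ.path (min θ.t r))
      (volume.restrict (Icc 0 T)) :=
    (hη.comp_aemeasurable (aemeasurable_const.min
      (aemeasurable_restrict_of_monotoneOn measurableSet_Icc hℓ))).sub
      (hstopped.aemeasurable measurableSet_Icc)
  rw [intervalIntegrable_iff_integrableOn_Icc_of_le (θ.ht.1.trans θ.ht.2)]
  refine Integrable.of_bound (hmeas.norm.pow_const q).aestronglyMeasurable ((B + A) ^ q)
    ((ae_restrict_mem measurableSet_Icc).mono fun r hr => ?_)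
  rw [Real.norm_of_nonneg (by positivity)]
  exact Real.rpow_le_rpow (norm_nonneg _)
    ((norm_sub_le _ _).trans (add_le_add (hB _) (hA r hr))) hq

end Penalization

/-! ### Near-optimal pairs -/

section Regularization

variable {T p s : ℝ} {d : ℕ} {η : ℝ → E d}

lemma mem_LL_iff {t : ℝ} {ℓ : ℝ → ℝ} (hs : s ≠ 0) :
    ℓ ∈ LL T t s ↔ MonotoneOn ℓ (Icc 0 T) ∧ StrictMonoOn ℓ (Icc 0 t) ∧
      BijOn ℓ (Icc 0 t) (Icc 0 s) ∧ ∀ r ∈ Ioc t T, ℓ r = r - t + s := by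
  simp only [LL, if_neg hs, mem_ofPred_eq]

lemma id_mem_LL (hs : s ≠ 0) : id ∈ LL T s s :=
  (mem_LL_iff hs).2 ⟨monotone_id.monotoneOn _, strictMono_id.strictMonoOn _, bijOn_id _,
    fun r _ => (sub_add_cancel r s).symm⟩

lemma apply_right_eq_of_mem_LL {t : ℝ} {ℓ : ℝ → ℝ} (ht : 0 ≤ t) (hs : 0 < s)
    (hℓ : ℓ ∈ LL T t s) : ℓ t = s := by
  obtain ⟨-, hstrict, hbij, -⟩ := (mem_LL_iff hs.ne').1 hℓ
  have htt : t ∈ Icc 0 t := ⟨ht, le_rfl⟩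
  obtain ⟨x, hx, hxs⟩ := hbij.surjOn (show s ∈ Icc 0 s from ⟨hs.le, le_rfl⟩)
  exact (hbij.mapsTo htt).2.antisymm (hxs ▸ hstrict.monotoneOn hx htt hx.2)

lemma exists_Phi_id_lt {B : ℝ} (hp : 0 < p) (hs : 0 < s) (hsT : s ≤ T) (hmeas : Measurable η)
    (hB : ∀ r, ‖η r‖ ≤ B) (hcont : ∀ r ∈ Ioc 0 s, ContinuousWithinAt η (Ici r) r)
    {ε : ℝ} (hε : 0 < ε) :
    ∃ θ : Theta T d, θ.t = s ∧ Phi T p s η θ id < ε := by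
  have hint (a b : ℝ) : IntervalIntegrable η volume a b :=
    (intervalIntegrable_const (c := B)).mono_fun hmeas.aestronglyMeasurable
      (.of_forall fun r => (hB r).trans (le_abs_self B))
  have hsmooth (h : ℝ) : Continuous (smoothedPath η h) := continuous_smoothedPath hint h
  have hlim : Tendsto (fun h => pnormPow T (p + 1)
      fun r => η (min s r) - smoothedPath η h (min s r)) (𝓝[>] 0) (𝓝 0) := by
    refine tendsto_pnormPow_zero (B := B + B) (hs.trans_le hsT) (by positivity)
      (fun h => ?_) ?_ fun r hr => ?_
    · exact (hmeas.sub (hsmooth h).measurable).comp (measurable_const.min measurable_id)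
    · filter_upwards [self_mem_nhdsWithin] with h hh r hr
      exact (norm_sub_le _ _).trans
        (add_le_add (hB _) (norm_smoothedPath_le hB hh (le_min hs.le hr.1.le)))
    · have hmin : min s r ∈ Ioc 0 s := ⟨lt_min hs hr.1, min_le_left _ _⟩
      simpa using (tendsto_smoothedPath hint hmin.1
        hmeas.stronglyMeasurable.stronglyMeasurableAtFilter
        (hcont _ hmin)).const_sub (η (min s r))
  obtain ⟨h, hh⟩ := (hlim.eventually_lt_const hε).exists
  refine ⟨⟨s, smoothedPath η h, ⟨hs.le, hsT⟩, (hsmooth h).continuousOn,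
    smoothedPath_zero_right η h⟩, rfl, ?_⟩
  rwa [Phi, supId_id, Real.zero_rpow (by positivity), zero_add]

variable {u : Theta T d → ℝ} {M : ℝ}

lemma sub_mul_Phi_le_reg (hu : ∀ θ, |u θ| ≤ M) (n : ℕ) {θ : Theta T d} {ℓ : ℝ → ℝ}
    (hθ : (θ.t, θ.path) ≠ (0, 0)) (hℓ : ℓ ∈ LL T θ.t s) :
    u θ - n * Phi T p s η θ ℓ ≤ reg T p u n s η := by
  refine le_csSup ⟨M, ?_⟩ ⟨θ, ℓ, hθ, hℓ, rfl⟩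
  rintro _ ⟨θ', ℓ', -, -, rfl⟩
  exact (sub_le_self _ (mul_nonneg n.cast_nonneg Phi_nonneg)).trans (le_of_abs_le (hu θ'))

lemma neg_le_reg {B : ℝ} (hu : ∀ θ, |u θ| ≤ M) (n : ℕ) (hp : 0 < p) (hs : 0 < s)
    (hsT : s ≤ T) (hmeas : Measurable η) (hB : ∀ r, ‖η r‖ ≤ B)
    (hcont : ∀ r ∈ Ioc 0 s, ContinuousWithinAt η (Ici r) r) :
    -M ≤ reg T p u n s η := by
  refine le_of_forall_pos_sub_le fun ε hε => ?_
  obtain ⟨θ, rfl, hΦ⟩ := exists_Phi_id_lt (p := p) (ε := ε / (n + 1)) hp hs hsT hmeas hB hcont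
    (by positivity)
  have hθ : (θ.t, θ.path) ≠ (0, 0) := fun h => hs.ne' (congrArg Prod.fst h)
  have hnΦ : n * Phi T p θ.t η θ id ≤ ε := by
    rw [lt_div_iff₀ (by positivity)] at hΦ
    nlinarith [Phi_nonneg (p := p) (s := θ.t) (η := η) (θ := θ) (ℓ := id)]
  calc -M - ε ≤ u θ - n * Phi T p θ.t η θ id := sub_le_sub (neg_le_of_abs_le (hu θ)) hnΦ
    _ ≤ reg T p u n θ.t η := sub_mul_Phi_le_reg hu n hθ (id_mem_LL hs.ne')

lemma Phi_le_div_of_optimal {B δ : ℝ} (hu : ∀ θ, |u θ| ≤ M) {n : ℕ} (hn : 1 ≤ n)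
    (hp : 0 < p) (hs : 0 < s) (hsT : s ≤ T) (hmeas : Measurable η) (hB : ∀ r, ‖η r‖ ≤ B)
    (hcont : ∀ r ∈ Ioc 0 s, ContinuousWithinAt η (Ici r) r) {θ : Theta T d} {ℓ : ℝ → ℝ}
    (hopt : reg T p u n s η - u θ + n * Phi T p s η θ ℓ < δ) :
    Phi T p s η θ ℓ ≤ (2 * M + δ) / n := by
  have hreg : -M ≤ reg T p u n s η := neg_le_reg hu n hp hs hsT hmeas hB hcont
  rw [le_div_iff₀' (by positivity)]
  linarith [le_of_abs_le (hu θ)]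

end Regularization

/-! ### Consequences of a small penalization -/

section Estimates

variable {T p s r₀ : ℝ} {d : ℕ} {η : ℝ → E d} {θ : Theta T d} {ℓ : ℝ → ℝ}

lemma sub_le_two_mul_supId_add (hs : 0 < s) (hℓ : ℓ ∈ LL T θ.t s) (hr₀ : r₀ ∈ Icc 0 θ.t) :
    θ.t - r₀ ≤ 2 * supId T ℓ + |s - ℓ r₀| := by
  have hmono := ((mem_LL_iff hs.ne').1 hℓ).1
  have hend := abs_sub_le_supId hmono θ.ht
  have hstart := abs_sub_le_supId hmono ⟨hr₀.1, hr₀.2.trans θ.ht.2⟩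
  rw [apply_right_eq_of_mem_LL θ.ht.1 hs hℓ] at hend
  linarith [neg_le_of_abs_le hend, le_of_abs_le hstart, le_abs_self (s - ℓ r₀)]

lemma integral_norm_const_sub_rpow_le_Phi {B : ℝ} {c : E d} (hp : 0 < p) (hs : 0 < s)
    (hmeas : Measurable η) (hB : ∀ r, ‖η r‖ ≤ B) (hℓ : ℓ ∈ LL T θ.t s) (hr₀ : r₀ ∈ Icc 0 θ.t)
    (hc : ∀ r ∈ Icc (ℓ r₀) s, η r = c) :
    ∫ r in r₀..θ.t, ‖c - θ.path r‖ ^ (p + 1) ≤ Phi T p s η θ ℓ := by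
  obtain ⟨hmono, hstrict, hbij, -⟩ := (mem_LL_iff hs.ne').1 hℓ
  have hη (r : ℝ) (hr : r ∈ Icc r₀ θ.t) : η (min s (ℓ r)) = c := by
    have hr' : r ∈ Icc 0 θ.t := ⟨hr₀.1.trans hr.1, hr.2⟩
    have hle : ℓ r ≤ s := (hbij.mapsTo hr').2
    rw [min_eq_right hle]
    exact hc _ ⟨hstrict.monotoneOn hr₀ hr' hr.1, hle⟩
  calc ∫ r in r₀..θ.t, ‖c - θ.path r‖ ^ (p + 1)
      = ∫ r in r₀..θ.t, ‖η (min s (ℓ r)) - θ.path (min θ.t r)‖ ^ (p + 1) :=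
        intervalIntegral.integral_congr fun r hr => by
          rw [uIcc_of_le hr₀.2] at hr
          simp only [hη r hr, min_eq_right hr.2]
    _ ≤ ∫ r in (0 : ℝ)..T, ‖η (min s (ℓ r)) - θ.path (min θ.t r)‖ ^ (p + 1) :=
        intervalIntegral.integral_mono_interval hr₀.1 hr₀.2 θ.ht.2
          (.of_forall fun r => by positivity)
          (intervalIntegrable_norm_sub_rpow hmeas hB hmono (by positivity) θ)
    _ ≤ Phi T p s η θ ℓ := integral_norm_rpow_le_Phi

lemma sub_le_of_Phi_le {K n : ℝ} (hK : 0 ≤ K) (hn : 0 < n) (hp : 0 < p) (hs : 0 < s)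
    (hℓ : ℓ ∈ LL T θ.t s) (hr₀ : r₀ ∈ Icc 0 θ.t) (hΦ : Phi T p s η θ ℓ ≤ K / n) :
    θ.t - r₀ ≤ 2 * K ^ ((3 * p + 3) / 2) * n ^ (-((3 * p + 3) / 2)) + |s - ℓ r₀| := by
  have hsup : supId T ℓ ≤ K ^ ((3 * p + 3) / 2) * n ^ (-((3 * p + 3) / 2)) := calc
    supId T ℓ ≤ Phi T p s η θ ℓ ^ ((3 * p + 3) / 2) := supId_le_rpow_Phi hp
    _ ≤ (K / n) ^ ((3 * p + 3) / 2) := Real.rpow_le_rpow Phi_nonneg hΦ (by positivity)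
    _ = _ := by rw [Real.div_rpow hK hn.le, Real.rpow_neg hn.le, div_eq_mul_inv]
  linarith [sub_le_two_mul_supId_add hs hℓ hr₀]

lemma integral_norm_const_sub_rpow_le_of_Phi_le {B K n : ℝ} {c : E d} (hK : 0 ≤ K) (hn : 0 < n)
    (hp : 0 < p) (hs : 0 < s) (hmeas : Measurable η) (hB : ∀ r, ‖η r‖ ≤ B)
    (hℓ : ℓ ∈ LL T θ.t s) (hr₀ : r₀ ∈ Icc 0 θ.t) (hc : ∀ r ∈ Icc (ℓ r₀) s, η r = c)
    (hΦ : Phi T p s η θ ℓ ≤ K / n) :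
    ∫ r in r₀..θ.t, ‖c - θ.path r‖ ^ p ≤
      K ^ (p / (p + 1)) * n ^ (-(p / (p + 1))) * (θ.t - r₀) ^ (1 / (p + 1)) := by
  have hcont : ContinuousOn (fun r => c - θ.path r) (Icc r₀ θ.t) :=
    continuousOn_const.sub (θ.cont.mono (Icc_subset_Icc hr₀.1 θ.ht.2))
  have hexp : 1 - p / (p + 1) = 1 / (p + 1) := by field_simp; ring
  have hlen : 0 ≤ θ.t - r₀ := sub_nonneg.2 hr₀.2
  have hnonneg : 0 ≤ ∫ r in r₀..θ.t, ‖c - θ.path r‖ ^ (p + 1) :=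
    intervalIntegral.integral_nonneg hr₀.2 fun _ _ => by positivity
  calc ∫ r in r₀..θ.t, ‖c - θ.path r‖ ^ p
      ≤ (∫ r in r₀..θ.t, ‖c - θ.path r‖ ^ (p + 1)) ^ (p / (p + 1)) *
          (θ.t - r₀) ^ (1 / (p + 1)) :=
        hexp ▸ intervalIntegral_norm_rpow_le_of_continuousOn hr₀.2 hp (lt_add_one p) hcont
    _ ≤ (K / n) ^ (p / (p + 1)) * (θ.t - r₀) ^ (1 / (p + 1)) := by
        gcongr
        exact (integral_norm_const_sub_rpow_le_Phi hp hs hmeas hB hℓ hr₀ hc).trans hΦ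
    _ = _ := by rw [Real.div_rpow hK hn.le, Real.rpow_neg hn.le, div_eq_mul_inv]

end Estimates

/-! ### Piecewise constant paths -/

section PiecewiseConstant

variable {d i : ℕ} (sVec : Fin i → ℝ) (xVec : Fin i → E d)

lemma measurable_pcPath : Measurable (pcPath sVec xVec) :=
  Finset.measurable_sum _ fun _ _ =>
    Measurable.ite measurableSet_Ici measurable_const measurable_const

lemma norm_pcPath_le (r : ℝ) : ‖pcPath sVec xVec r‖ ≤ ∑ j, ‖xVec j‖ := by
  refine (norm_sum_le _ _).trans (Finset.sum_le_sum fun j _ => ?_)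
  split_ifs <;> simp

lemma continuousWithinAt_pcPath (r : ℝ) : ContinuousWithinAt (pcPath sVec xVec) (Ici r) r := by
  refine tendsto_finsetSum _ fun j _ => ?_
  change ContinuousWithinAt (fun y => if sVec j ≤ y then xVec j else 0) (Ici r) r
  rcases le_or_gt (sVec j) r with hle | hlt
  · exact continuousWithinAt_const.congr (fun y hy => if_pos (hle.trans hy)) (if_pos hle)
  · refine ((continuousAt_const (y := (0 : E d))).congr ?_).continuousWithinAt
    filter_upwards [Iio_mem_nhds hlt] with y hy
    exact (if_neg (not_le.2 hy)).symm

variable {sVec} in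
lemma pcPath_eq_sum {r : ℝ} (hr : ∀ j, sVec j ≤ r) : pcPath sVec xVec r = ∑ j, xVec j :=
  Finset.sum_congr rfl fun j _ => if_pos (hr j)

end PiecewiseConstant

theorem stmt11_general (T : ℝ) {p : ℝ} (hp : 0 < p) (M : ℝ) :
    ∃ C > 0, ∀ (d : ℕ) (u : Theta T d → ℝ), (∀ θ, |u θ| ≤ M) → ∀ n : ℕ, 1 ≤ n →
    ∀ (η : ℝ → E d) (B : ℝ), Measurable η → (∀ r, ‖η r‖ ≤ B) →
    ∀ s : ℝ, 0 < s → s ≤ T → (∀ r ∈ Ioc 0 s, ContinuousWithinAt η (Ici r) r) →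
    ∀ (θ : Theta T d) (ℓ : ℝ → ℝ), ℓ ∈ LL T θ.t s →
      reg T p u n s η - u θ + n * Phi T p s η θ ℓ < 1 →
    ∀ r₀ ∈ Icc 0 θ.t, ∀ c : E d, (∀ r ∈ Icc (ℓ r₀) s, η r = c) →
      |θ.t - r₀| ≤ C * (n : ℝ) ^ (-((3 * p + 3) / 2)) + |s - ℓ r₀| ∧
      ∫ t in r₀..θ.t, ‖c - θ.path t‖ ^ p ≤ C * (n : ℝ) ^ (-(p / (p + 1))) *
        ((n : ℝ) ^ (-((3 * p + 3) / 2)) + |s - ℓ r₀|) ^ (1 / (p + 1)) := by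
  set K : ℝ := 2 * |M| + 1
  set D : ℝ := 2 * K ^ ((3 * p + 3) / 2)
  have hD : 1 ≤ D := by
    have hK : 1 ≤ K := by simp [K]
    linarith [Real.one_le_rpow hK (show 0 ≤ (3 * p + 3) / 2 by positivity)]
  refine ⟨max D (K ^ (p / (p + 1)) * D ^ (1 / (p + 1))), by positivity, ?_⟩
  intro d u hu n hn η B hmeas hB s hs hsT hcont θ ℓ hℓ hopt r₀ hr₀ c hc
  have hn0 : (0 : ℝ) < n := by exact_mod_cast hn
  have hΦ : Phi T p s η θ ℓ ≤ K / n :=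
    Phi_le_div_of_optimal (fun θ => (hu θ).trans (le_abs_self M)) hn hp hs hsT hmeas hB hcont hopt
  set N : ℝ := (n : ℝ) ^ (-((3 * p + 3) / 2))
  have htime : θ.t - r₀ ≤ D * N + |s - ℓ r₀| :=
    sub_le_of_Phi_le (by positivity) hn0 hp hs hℓ hr₀ hΦ
  have hlen : 0 ≤ θ.t - r₀ := sub_nonneg.2 hr₀.2
  constructor
  · rw [abs_of_nonneg hlen]
    exact htime.trans (by gcongr; exact le_max_left _ _)
  · calc ∫ t in r₀..θ.t, ‖c - θ.path t‖ ^ p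
        ≤ K ^ (p / (p + 1)) * n ^ (-(p / (p + 1))) * (θ.t - r₀) ^ (1 / (p + 1)) :=
          integral_norm_const_sub_rpow_le_of_Phi_le (by positivity) hn0 hp hs hmeas hB hℓ hr₀ hc hΦ
      _ ≤ K ^ (p / (p + 1)) * n ^ (-(p / (p + 1))) * (D * (N + |s - ℓ r₀|)) ^ (1 / (p + 1)) := by
          gcongr
          nlinarith [abs_nonneg (s - ℓ r₀)]
      _ = K ^ (p / (p + 1)) * D ^ (1 / (p + 1)) * n ^ (-(p / (p + 1))) *
            (N + |s - ℓ r₀|) ^ (1 / (p + 1)) := by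
          rw [Real.mul_rpow (by positivity) (by positivity)]
          ring
      _ ≤ _ := by
          gcongr
          exact le_max_right _ _

/-- (Estimates (5.27) and (5.28)) For a 1-optimal `(θ̃, ℓ̃)` in the definition of
`u^n(s, η^{λ_i}(x))` with `s ≥ s_i`, `s > 0`, and `r₀ = ℓ̃^{-1}(s_i)` (characterized
by `r₀ ∈ [0, t̃]` and `ℓ̃(r₀) = s_i`):
`|t̃ - r₀| ≤ C n^{-(3p+3)/2} + |s - s_i|` and
`∫_{r₀}^{t̃} |x_i·1 - ω̃_t|^p dt ≤ C n^{-p/(p+1)} (n^{-(3p+3)/2} + |s - s_i|)^{1/(p+1)}`,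
where `C > 0` depends only on `T`, `p` and the bound `M` on `u`. -/
theorem stmt11 (T : ℝ) (hT : 0 < T) (d : ℕ) (hd : 1 ≤ d) (p : ℝ) (hp : 1 ≤ p) (M : ℝ) :
    ∃ C > 0, ∀ u : Theta T d → ℝ, (∀ θ : Theta T d, |u θ| ≤ M) →
    ∀ n : ℕ, 1 ≤ n →
    ∀ (m : ℕ) (sVec : Fin (m + 1) → ℝ) (xVec : Fin (m + 1) → E d),
      sVec 0 = 0 → StrictMono sVec → sVec (Fin.last m) ≤ T →
    ∀ s : ℝ, sVec (Fin.last m) ≤ s → s ≤ T → 0 < s →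
    ∀ (θtil : Theta T d) (ℓtil : ℝ → ℝ),
      (θtil.t, θtil.path) ≠ (0, 0) → ℓtil ∈ LL T θtil.t s →
      -- 1-optimality of `(θ̃, ℓ̃)`
      reg T p u n s (pcPath sVec xVec) - u θtil
          + (n : ℝ) * Phi T p s (pcPath sVec xVec) θtil ℓtil < 1 →
    ∀ r₀ ∈ Set.Icc (0:ℝ) θtil.t, ℓtil r₀ = sVec (Fin.last m) →
      |θtil.t - r₀| ≤ C * (n : ℝ) ^ (-((3 * p + 3) / 2)) + |s - sVec (Fin.last m)| ∧
      (∫ t in r₀..θtil.t, ‖(∑ j, xVec j) - θtil.path t‖ ^ p) ≤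
        C * (n : ℝ) ^ (-(p / (p + 1)))
          * ((n : ℝ) ^ (-((3 * p + 3) / 2)) + |s - sVec (Fin.last m)|) ^ (1 / (p + 1)) := by
  obtain ⟨C, hC, hbound⟩ := stmt11_general T (zero_lt_one.trans_le hp) M
  refine ⟨C, hC, fun u hu n hn m sVec xVec _ hmono _ s _ hsT hs θ ℓ _ hℓ hopt r₀ hr₀ hr₀s => ?_⟩
  exact hr₀s ▸ hbound d u hu n hn _ _ (measurable_pcPath sVec xVec) (norm_pcPath_le sVec xVec)
    s hs hsT (fun r _ => continuousWithinAt_pcPath sVec xVec r) θ ℓ hℓ hopt r₀ hr₀ (∑ j, xVec j)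
    fun r hr => pcPath_eq_sum xVec fun j => (hmono.monotone (Fin.le_last j)).trans (hr₀s ▸ hr.1)
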